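/- Fix d ≥ 2 and a fraction p/q in lowest terms with q ≥ 2, 1 ≤ p ≤ q−1, gcd(p,q) = 1. For 1 ≤ i ≤ n, let O_i be pairwise distinct σ_d-rotational orbits with rotation number p/q, with representative sequences s_i = b_0^{(i)}, b_1^{(i)}, ..., b_{q-1}^{(i)}. Then A = O_1 ∪ ... ∪ O_n is σ_d-rotational with rotation number p/q if and only if the collection {s_1, ..., s_n} can be interlaced, i.e. after relabeling the orbits, the sequence b_0^{(1)}, b_0^{(2)}, ..., b_0^{(n)}, b_1^{(1)}, ..., b_1^{(n)}, ..., b_{q-1}^{(1)}, ..., b_{q-1}^{(n)} is nondecreasing (hence a (d−1)-sequence of length nq). -/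

import Mathlib

/-- The angle-multiplying map `σ_d : 𝕋 → 𝕋`, where the circle `𝕋 = ℝ/ℤ` is identified with
the set of representatives `[0,1) ⊆ ℝ` (and so ordered by comparing these representatives). -/
noncomputable def sigmad (d : ℕ) (t : ℝ) : ℝ := Int.fract (d * t)

/-- The orbit of a point of the circle under `σ_d`. -/
def sigmaOrbit (d : ℕ) (t : ℝ) : Set ℝ := {s | ∃ k : ℕ, (sigmad d)^[k] t = s}

/-- `t : ZMod q → ℝ` lists (with indices viewed in `ℤ/qℤ`) the elements
`t 0 < t 1 < ⋯ < t (q-1)` of a `σ_d`-rotational set with rotation number `p/q`. -/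
def IsRotational (d q : ℕ) (p : ZMod q) (t : ZMod q → ℝ) : Prop :=
  (∀ i, t i ∈ Set.Ico (0:ℝ) 1) ∧
  (∀ i j : ZMod q, i.val < j.val → t i < t j) ∧
  p ≠ 0 ∧
  ∀ i, sigmad d (t i) = t (i + p)

/-- The point of the circle with repeating base-`d` expansion `0.‾(a_0 a_1 … a_{q-1})`. -/
noncomputable def tuplePoint (d q : ℕ) (a : ZMod q → ℕ) : ℝ :=
  Int.fract ((∑ i ∈ Finset.range q, (a (i : ZMod q) : ℝ) * (d : ℝ) ^ (q - 1 - i)) /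
    ((d : ℝ) ^ q - 1))

/-- The `k`-th term (`0 ≤ k ≤ q-1`) of the representative sequence of the rotational orbit
whose least element has digits `a`: it is `a_{kp*}` for `0 ≤ k ≤ q-p-1` and
`a_{kp*} - 1` for `q-p ≤ k ≤ q-1`. -/
def repDigit (q p : ℕ) (a : ZMod q → ℕ) (k : ℕ) : ℕ :=
  if k ≤ q - p - 1 then a ((k : ZMod q) * ((p : ZMod q))⁻¹)
  else a ((k : ZMod q) * ((p : ZMod q))⁻¹) - 1

/-!
Listing the preimage in `ℝ` of a rotational set increasingly gives `X : ℤ → ℝ` with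
`X (j + q) = X j + 1` and `d * X j = X (j + p) + C j` for an integer sequence `C`. On one period
`C` is the representative sequence: it is the sequence of digits `⌊d * X j⌋`, lowered by one as soon
as `j + p` passes the period.

The union of `n` orbits is rotational iff, for some ordering of the orbits, the interleaving of
their lists is strictly increasing. The interleaving satisfies the same functional equation, with
the interleaved `C`; so its gaps `g j = X (j + 1) - X j` satisfy
`d * g j = g (j + p) + (C (j + 1) - C j)`. If `X` is increasing, then gaps are positive and less
than one, which forces `C (j + 1) - C j > -1`. Conversely, if `C` is nondecreasing then
`g (j + p) ≤ d * g j`, and as gaps are bounded below and `d > 1`, all of them are nonnegative;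
distinctness makes them positive.
-/

lemma sigmad_fract (d : ℕ) (x : ℝ) : sigmad d (Int.fract x) = Int.fract (d * x) := by
  rw [sigmad, Int.fract_eq_fract]
  exact ⟨-(d * ⌊x⌋), by rw [Int.fract]; push_cast; ring⟩

lemma nonneg_of_comp_le_mul {ι : Type*} {g : ι → ℝ} {f : ι → ι} {c : ℝ}
    (hg : BddBelow (Set.range g)) (hc : 1 < c) (h : ∀ i, g (f i) ≤ c * g i) (i : ι) : 0 ≤ g i := by
  have : Nonempty ι := ⟨i⟩
  have hle : ∀ k, (⨅ k, g k) / c ≤ g k := fun k =>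
    (div_le_iff₀' (by linarith)).2 ((ciInf_le hg (f k)).trans (h k))
  have hinf : (⨅ k, g k) / c ≤ ⨅ k, g k := le_ciInf hle
  rw [div_le_iff₀ (by linarith)] at hinf
  have : 0 ≤ ⨅ k, g k := by nlinarith
  exact this.trans (ciInf_le hg i)

lemma exists_gap_eq {α : Type*} [AddCommGroup α] {f : ℤ → α} {q : ℤ} {c : α} (hq : 0 < q)
    (hf : ∀ j, f (j + q) = f j + c) (j : ℤ) :
    ∃ r ∈ Set.Ico (-1) (q - 1), f (j + 1) - f j = f (r + 1) - f r := by
  have hper : Function.Periodic (fun j => f (j + 1) - f j) q := fun j => by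
    simp only [add_right_comm j q 1, hf, add_sub_add_right_eq_sub]
  rw [sub_eq_neg_add q 1]
  exact hper.exists_mem_Ico hq j (-1)

/-- `X : ℤ → ℝ` satisfies the equations of a lift to `ℝ` of a map `ℤ/qℤ → [0, 1)` on which `σ_d`
acts as the shift of indices by `p`; the indices `0, ..., q - 1` are the ones lifted to `[0, 1)`.
Monotonicity is not part of the notion: it does not pass to interleavings, these equations do. -/
structure IsLift (d q p : ℕ) (X : ℤ → ℝ) : Prop where
  floor_eq : ∀ j, ⌊X j⌋ = j / q
  map_add_period : ∀ j, X (j + q) = X j + 1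
  fract_mul : ∀ j, Int.fract (d * X j) = Int.fract (X (j + p))

/-- The integer sequence `C` of the functional equation `d * X j = X (j + p) + C j` of a lift `X`.
It is defined through floors, so that it is an integer before the equation is known. -/
noncomputable def carry (d p : ℕ) (X : ℤ → ℝ) (j : ℤ) : ℤ := ⌊d * X j⌋ - ⌊X (j + p)⌋

namespace IsLift

variable {d q p : ℕ} {X : ℤ → ℝ}

lemma mul_eq (hX : IsLift d q p X) (j : ℤ) : d * X j = X (j + p) + carry d p X j := by
  have h := hX.fract_mul j
  simp only [Int.fract] at h
  rw [carry, Int.cast_sub]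
  linarith

lemma carry_gap_eq (hX : IsLift d q p X) (j : ℤ) :
    (carry d p X (j + 1) - carry d p X j : ℝ) =
      d * (X (j + 1) - X j) - (X (j + p + 1) - X (j + p)) := by
  rw [mul_sub, hX.mul_eq, hX.mul_eq, add_right_comm]
  ring

lemma carry_add_period (hX : IsLift d q p X) (j : ℤ) :
    carry d p X (j + q) = carry d p X j + (d - 1) := by
  rw [carry, carry, add_right_comm, hX.map_add_period, hX.map_add_period, mul_add, mul_one,
    Int.floor_add_natCast, Int.floor_add_one]
  ring

lemma apply_nonneg (hX : IsLift d q p X) {j : ℤ} (hj : 0 ≤ j) : 0 ≤ X j := by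
  rw [← Int.floor_nonneg, hX.floor_eq]
  exact Int.ediv_nonneg hj q.cast_nonneg

lemma apply_neg_one_neg (hX : IsLift d q p X) (hq : 0 < q) : X (-1) < 0 := by
  rw [← Int.cast_zero, ← Int.floor_lt, hX.floor_eq]
  exact Int.ediv_neg_of_neg_of_pos (by lia) (by lia)

lemma carry_zero_nonneg (hX : IsLift d q p X) (hpq : p < q) : 0 ≤ carry d p X 0 := by
  have hfloor : ⌊X (0 + p)⌋ = 0 := by
    rw [hX.floor_eq, Int.ediv_eq_zero_of_lt (by lia) (by lia)]
  rw [carry, hfloor, sub_zero, Int.floor_nonneg]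
  exact mul_nonneg d.cast_nonneg (hX.apply_nonneg le_rfl)

lemma carry_neg_one_neg (hX : IsLift d q p X) (hd : 0 < d) (hp : 0 < p) (hq : 0 < q) :
    carry d p X (-1) < 0 := by
  have hmul : (d : ℝ) * X (-1) < 0 :=
    mul_neg_of_pos_of_neg (Nat.cast_pos.2 hd) (hX.apply_neg_one_neg hq)
  have hnonneg : 0 ≤ X (-1 + p) := hX.apply_nonneg (by lia)
  have hcast : (carry d p X (-1) : ℝ) < 0 := by linarith [hX.mul_eq (-1)]
  exact_mod_cast hcast

lemma strictMono_of_lt_succ (hX : IsLift d q p X) (hq : 0 < q)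
    (h : ∀ j : ℕ, j + 1 < q → X j < X (j + 1 : ℕ)) : StrictMono X := by
  refine strictMono_int_of_lt_succ fun j => sub_pos.1 ?_
  obtain ⟨r, ⟨hr, hrq⟩, hgap⟩ := exists_gap_eq (by lia) hX.map_add_period j
  rw [hgap, sub_pos]
  obtain rfl | hr := hr.eq_or_lt
  · exact (hX.apply_neg_one_neg hq).trans_le (hX.apply_nonneg le_rfl)
  · lift r to ℕ using by lia
    exact_mod_cast h r (by lia)

lemma monotone_carry_iff (hX : IsLift d q p X) (hd : 0 < d) (hp : 0 < p) (hpq : p < q) :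
    Monotone (carry d p X) ↔ ∀ j : ℕ, j + 1 < q → carry d p X j ≤ carry d p X (j + 1 : ℕ) := by
  refine ⟨fun h j _ => h (by lia), fun h => monotone_int_of_le_succ fun j => sub_nonneg.1 ?_⟩
  obtain ⟨r, ⟨hr, hrq⟩, hgap⟩ := exists_gap_eq (by lia) hX.carry_add_period j
  rw [hgap, sub_nonneg]
  obtain rfl | hr := hr.eq_or_lt
  · exact ((hX.carry_neg_one_neg hd hp (by lia)).trans_le (hX.carry_zero_nonneg hpq)).le
  · lift r to ℕ using by lia
    exact_mod_cast h r (by lia)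

lemma monotone_carry (hX : IsLift d q p X) (hq : 1 < q) (hmono : StrictMono X) :
    Monotone (carry d p X) := by
  refine monotone_int_of_le_succ fun j => ?_
  have hgap : 0 < X (j + 1) - X j := sub_pos.2 (hmono (by lia))
  have hgap' : X (j + p + 1) - X (j + p) < 1 := by
    rw [sub_lt_iff_lt_add', ← hX.map_add_period]
    exact hmono (by lia)
  have hlt : (carry d p X j : ℝ) < carry d p X (j + 1) + 1 := by
    nlinarith [hX.carry_gap_eq j, (d.cast_nonneg : (0 : ℝ) ≤ d)]
  exact Int.lt_add_one_iff.1 (by exact_mod_cast hlt)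

lemma neg_one_le_gap (hX : IsLift d q p X) (hq : 0 < q) (j : ℤ) : -1 ≤ X (j + 1) - X j := by
  have hle : ⌊X j⌋ ≤ ⌊X (j + 1)⌋ := by
    rw [hX.floor_eq, hX.floor_eq]
    exact Int.ediv_le_ediv (by lia) (by lia)
  have hcast : (⌊X j⌋ : ℝ) ≤ ⌊X (j + 1)⌋ := by exact_mod_cast hle
  linarith [Int.lt_floor_add_one (X j), Int.floor_le (X (j + 1))]

lemma monotone_of_monotone_carry (hX : IsLift d q p X) (hd : 1 < d) (hq : 0 < q)
    (hC : Monotone (carry d p X)) : Monotone X := by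
  refine monotone_int_of_le_succ fun j => sub_nonneg.1 ?_
  refine nonneg_of_comp_le_mul (g := fun j => X (j + 1) - X j) (f := (· + (p : ℤ))) (c := d)
    ⟨-1, Set.forall_mem_range.2 (hX.neg_one_le_gap hq)⟩ (by exact_mod_cast hd) (fun j => ?_) j
  have hle : (carry d p X j : ℝ) ≤ carry d p X (j + 1) := by exact_mod_cast hC (by lia)
  linarith [hX.carry_gap_eq j]

theorem strictMono_iff_monotone_carry (hX : IsLift d q p X) (hd : 1 < d) (hq : 1 < q)
    (hinj : Function.Injective X) : StrictMono X ↔ Monotone (carry d p X) :=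
  ⟨hX.monotone_carry hq,
    fun hC => (hX.monotone_of_monotone_carry hd (by lia) hC).strictMono_of_injective hinj⟩

lemma fract_val [NeZero q] (hX : IsLift d q p X) (j : ℤ) :
    Int.fract (X (j : ZMod q).val) = Int.fract (X j) := by
  have hper : Function.Periodic (fun j => Int.fract (X j)) q := fun j => by
    simp only [hX.map_add_period, Int.fract_add_one]
  rw [ZMod.val_intCast, Int.emod_def, mul_comm]
  exact hper.sub_int_mul_eq (j / q)

lemma range_fract_val [NeZero q] (hX : IsLift d q p X) :
    Set.range (fun i : ZMod q => Int.fract (X i.val)) = Set.range (fun j => Int.fract (X j)) :=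
  Set.Subset.antisymm (Set.range_subset_iff.2 fun i => ⟨i.val, rfl⟩)
    (Set.range_subset_iff.2 fun j => ⟨j, hX.fract_val j⟩)

lemma isRotational [NeZero q] (hX : IsLift d q p X) (hmono : StrictMono X)
    (hp : (p : ZMod q) ≠ 0) : IsRotational d q p fun i => Int.fract (X i.val) := by
  have hfract : ∀ i : ZMod q, Int.fract (X i.val) = X i.val := fun i => by
    rw [Int.fract, hX.floor_eq, Int.ediv_eq_zero_of_lt (by lia) (by exact_mod_cast i.val_lt),
      Int.cast_zero, sub_zero]
  refine ⟨fun i => ⟨Int.fract_nonneg _, Int.fract_lt_one _⟩, fun i j hij => ?_, hp, fun i => ?_⟩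
  · simp only [hfract]
    exact hmono (by exact_mod_cast hij)
  · rw [sigmad_fract, hX.fract_mul, ← hX.fract_val]
    simp

end IsLift

/-- The lift to `ℝ` of a `q`-tuple of points of the circle indexed by `ℤ/qℤ`: the index gains a
multiple of `q` when the point of `ℝ` gains the corresponding integer. -/
noncomputable def realLift {q : ℕ} (u : ZMod q → ℝ) (j : ℤ) : ℝ := u j + (j / q : ℤ)

lemma IsLift.realLift_fract_val {d q p : ℕ} {X : ℤ → ℝ} [NeZero q] (hX : IsLift d q p X) :
    realLift (fun i : ZMod q => Int.fract (X i.val)) = X := by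
  funext j
  rw [realLift, hX.fract_val, ← hX.floor_eq, Int.fract_add_floor]

lemma exists_eq_natCast_mul_of_coprime {p q : ℕ} [NeZero q] (hpq : p.Coprime q) (k : ZMod q) :
    ∃ m : ℕ, k = m * p := by
  refine ⟨(k * (p : ZMod q)⁻¹).val, ?_⟩
  rw [ZMod.natCast_zmod_val, mul_assoc,
    ZMod.inv_mul_of_unit _ ((ZMod.isUnit_iff_coprime p q).2 hpq), mul_one]

namespace IsRotational

variable {d q : ℕ}

section Index

variable {p : ZMod q} {u v : ZMod q → ℝ}

lemma fract_realLift (hu : IsRotational d q p u) (j : ℤ) : Int.fract (realLift u j) = u j := by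
  rw [realLift, Int.fract_add_intCast, Int.fract_eq_self.2 (hu.1 _)]

lemma floor_realLift (hu : IsRotational d q p u) (j : ℤ) : ⌊realLift u j⌋ = j / q := by
  rw [realLift, Int.floor_add_intCast, Int.floor_eq_zero_iff.2 (hu.1 _), zero_add]

lemma iterate_sigmad (hu : IsRotational d q p u) (i : ZMod q) (m : ℕ) :
    (sigmad d)^[m] (u i) = u (i + m * p) := by
  induction m with
  | zero => simp
  | succ m ih =>
    rw [Function.iterate_succ_apply', ih, hu.2.2.2, Nat.cast_succ, add_one_mul, add_assoc]

lemma strictMono_natCast (hu : IsRotational d q p u) :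
    StrictMono fun i : Fin q => u (i : ℕ) := fun i j hij =>
  hu.2.1 _ _ (by rwa [ZMod.val_cast_of_lt i.2, ZMod.val_cast_of_lt j.2])

variable [NeZero q]

lemma injective (hu : IsRotational d q p u) : Function.Injective u := fun i j hij => by
  have h : (⟨i.val, i.val_lt⟩ : Fin q) = ⟨j.val, j.val_lt⟩ :=
    hu.strictMono_natCast.injective (by simpa using hij)
  exact ZMod.val_injective q (Fin.mk.inj h)

lemma apply_ne_zero (hu : IsRotational d q p u) (i : ZMod q) : u i ≠ 0 := fun h => by
  have hshift : u (i + p) = u i := by rw [← hu.2.2.2, h, sigmad, mul_zero, Int.fract_zero]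
  exact hu.2.2.1 (add_eq_left.1 (hu.injective hshift))

lemma isLeast_range (hu : IsRotational d q p u) : IsLeast (Set.range u) (u 0) := by
  refine ⟨⟨0, rfl⟩, Set.forall_mem_range.2 fun i => ?_⟩
  simpa using hu.strictMono_natCast.monotone (Fin.zero_le ⟨i.val, i.val_lt⟩)

lemma eq_of_range_eq (hu : IsRotational d q p u) (hv : IsRotational d q p v)
    (h : Set.range u = Set.range v) : u = v := by
  have hsurj : Function.Surjective fun i : Fin q => ((i : ℕ) : ZMod q) := fun i =>
    ⟨⟨i.val, i.val_lt⟩, ZMod.natCast_zmod_val i⟩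
  refine hsurj.injective_comp_right ((hu.strictMono_natCast.range_inj hv.strictMono_natCast).1 ?_)
  exact (hsurj.range_comp u).trans (h.trans (hsurj.range_comp v).symm)

end Index

variable {p : ℕ} {u : ZMod q → ℝ} [NeZero q]

lemma isLift_realLift (hu : IsRotational d q p u) : IsLift d q p (realLift u) where
  floor_eq := hu.floor_realLift
  map_add_period j := by
    rw [realLift, realLift, Int.add_ediv_of_dvd_right dvd_rfl,
      Int.ediv_self (by exact_mod_cast NeZero.ne q)]
    simp [add_assoc]
  fract_mul j := by
    rw [← sigmad_fract, hu.fract_realLift, hu.fract_realLift, hu.2.2.2]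
    simp

lemma strictMono_realLift (hu : IsRotational d q p u) : StrictMono (realLift u) := by
  refine hu.isLift_realLift.strictMono_of_lt_succ (NeZero.pos q) fun j hj => ?_
  have hval : (j : ZMod q).val < ((j + 1 : ℕ) : ZMod q).val := by
    rw [ZMod.val_cast_of_lt (by lia), ZMod.val_cast_of_lt hj]
    lia
  have hdiv (i : ℕ) (hi : i < q) : ((i : ℤ) / q) = 0 := Int.ediv_eq_zero_of_lt (by lia) (by lia)
  simpa only [realLift, hdiv j (by lia), hdiv (j + 1) hj, Int.cast_zero, add_zero,
    Int.cast_natCast] using hu.2.1 _ _ hval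

lemma range_eq_sigmaOrbit (hu : IsRotational d q p u) (hpq : p.Coprime q) (i : ZMod q) :
    Set.range u = sigmaOrbit d (u i) := by
  ext x
  constructor
  · rintro ⟨j, rfl⟩
    obtain ⟨m, hm⟩ := exists_eq_natCast_mul_of_coprime hpq (j - i)
    exact ⟨m, by rw [hu.iterate_sigmad, ← hm, add_sub_cancel]⟩
  · rintro ⟨m, rfl⟩
    exact ⟨_, (hu.iterate_sigmad i m).symm⟩

end IsRotational

/-- The function `ℤ → α` obtained by merging `n` functions `F i : ℤ → α`, with
`F 0 k, F 1 k, ..., F (n - 1) k` at the `n` places `n * k, ..., n * k + n - 1`. -/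
def interleave {n : ℕ} [NeZero n] {α : Type*} (F : Fin n → ℤ → α) (j : ℤ) : α :=
  F (Int.divModEquiv n j).2 (Int.divModEquiv n j).1

section Interleave

variable {n : ℕ} [NeZero n] {α : Type*}

lemma interleave_apply (F : Fin n → ℤ → α) (k : ℤ) (i : Fin n) :
    interleave F (k * n + i) = F i k := by
  have h : Int.divModEquiv n (k * n + i) = (k, i) := (Int.divModEquiv n).apply_symm_apply (k, i)
  rw [interleave, h]

lemma exists_eq_mul_add_fin (n : ℕ) [NeZero n] (j : ℤ) : ∃ (k : ℤ) (i : Fin n), j = k * n + i :=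
  ⟨_, _, ((Int.divModEquiv n).symm_apply_apply j).symm⟩

lemma interleave_natCast (F : Fin n → ℤ → α) (j : ℕ) :
    interleave F j = F ⟨j % n, j.mod_lt (NeZero.pos n)⟩ (j / n : ℕ) := by
  rw [← interleave_apply F]
  congr 1
  exact_mod_cast (Nat.div_add_mod' j n).symm

lemma interleave_add_mul (F : Fin n → ℤ → α) (j : ℤ) (m : ℕ) :
    interleave F (j + (n * m : ℕ)) = interleave (fun i k => F i (k + m)) j := by
  obtain ⟨k, i, rfl⟩ := exists_eq_mul_add_fin n j
  rw [interleave_apply, ← interleave_apply F]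
  congr 1
  push_cast
  ring

lemma interleave_surjective :
    Function.Surjective (interleave : (Fin n → ℤ → α) → ℤ → α) := fun f => by
  refine ⟨fun i k => f (k * n + i), funext fun j => ?_⟩
  obtain ⟨k, i, rfl⟩ := exists_eq_mul_add_fin n j
  exact interleave_apply _ k i

lemma range_interleave (F : Fin n → ℤ → α) :
    Set.range (interleave F) = ⋃ i, Set.range (F i) := by
  ext x
  simp only [Set.mem_iUnion, Set.mem_range]
  constructor
  · rintro ⟨j, rfl⟩
    exact ⟨_, _, rfl⟩
  · rintro ⟨i, k, rfl⟩
    exact ⟨_, interleave_apply F k i⟩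

lemma strictMono_of_interleave [Preorder α] {F : Fin n → ℤ → α} (h : StrictMono (interleave F))
    (i : Fin n) : StrictMono (F i) := fun k l hkl => by
  rw [← interleave_apply F, ← interleave_apply F]
  have : 0 < (n : ℤ) := by exact_mod_cast NeZero.pos n
  exact h (by gcongr)

lemma injective_interleave {F : Fin n → ℤ → α} (hF : ∀ i, Function.Injective (F i))
    (hdisj : Pairwise (Function.onFun Disjoint fun i => Set.range (F i))) :
    Function.Injective (interleave F) := fun j j' h => by
  obtain ⟨k, i, rfl⟩ := exists_eq_mul_add_fin n j
  obtain ⟨k', i', rfl⟩ := exists_eq_mul_add_fin n j'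
  rw [interleave_apply, interleave_apply] at h
  obtain rfl : i = i' := hdisj.eq (Set.not_disjoint_iff.2 ⟨_, ⟨k, rfl⟩, ⟨k', h.symm⟩⟩)
  rw [hF i h]

variable {d q p : ℕ} {X : Fin n → ℤ → ℝ}

lemma isLift_interleave_iff :
    IsLift d (n * q) (n * p) (interleave X) ↔ ∀ i, IsLift d q p (X i) := by
  have hdiv (k : ℤ) (i : Fin n) : (k * n + i) / (n * q : ℕ) = k / q := by
    have h : (k * n + i) / n = k :=
      congrArg Prod.fst ((Int.divModEquiv n).apply_symm_apply (k, i))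
    rw [Nat.cast_mul, ← Int.ediv_ediv_of_nonneg n.cast_nonneg, h]
  constructor
  · refine fun h i => ⟨fun k => ?_, fun k => ?_, fun k => ?_⟩
    · simpa only [interleave_apply, hdiv] using h.floor_eq (k * n + i)
    · simpa only [interleave_add_mul, interleave_apply] using h.map_add_period (k * n + i)
    · simpa only [interleave_add_mul, interleave_apply] using h.fract_mul (k * n + i)
  · refine fun h => ⟨fun j => ?_, fun j => ?_, fun j => ?_⟩ <;>
      obtain ⟨k, i, rfl⟩ := exists_eq_mul_add_fin n j
    · rw [interleave_apply, hdiv, (h i).floor_eq]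
    · rw [interleave_add_mul, interleave_apply, interleave_apply, (h i).map_add_period]
    · rw [interleave_add_mul, interleave_apply, interleave_apply, (h i).fract_mul]

lemma carry_interleave (X : Fin n → ℤ → ℝ) :
    carry d (n * p) (interleave X) = interleave fun i => carry d p (X i) := by
  funext j
  rw [carry, interleave_add_mul]
  rfl

end Interleave

section Union

variable {d q p n : ℕ} [NeZero n] {x : Fin n → ZMod q → ℝ}

lemma range_fract_interleave_realLift (hx : ∀ i, IsRotational d q p (x i)) :
    Set.range (fun j => Int.fract (interleave (fun i => realLift (x i)) j)) =
      ⋃ i, Set.range (x i) := by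
  calc _ = ⋃ i, Set.range fun k => Int.fract (realLift (x i) k) :=
        range_interleave fun i k => Int.fract (realLift (x i) k)
    _ = ⋃ i, Set.range (x i) := Set.iUnion_congr fun i => by
        simp only [(hx i).fract_realLift]
        exact ZMod.intCast_surjective.range_comp (x i)

variable [NeZero q]

lemma exists_isRotational_of_strictMono_interleave (hx : ∀ i, IsRotational d q p (x i))
    (hmono : StrictMono (interleave fun i => realLift (x i))) :
    ∃ u : ZMod (n * q) → ℝ, Set.range u = (⋃ i, Set.range (x i)) ∧
      IsRotational d (n * q) (n * p : ℕ) u := by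
  have hX : IsLift d (n * q) (n * p) (interleave fun i => realLift (x i)) :=
    isLift_interleave_iff.2 fun i => (hx i).isLift_realLift
  have hnp : ((n * p : ℕ) : ZMod (n * q)) ≠ 0 := by
    rw [Ne, ZMod.natCast_eq_zero_iff, Nat.mul_dvd_mul_iff_left (NeZero.pos n),
      ← ZMod.natCast_eq_zero_iff]
    exact (hx 0).2.2.1
  exact ⟨_, hX.range_fract_val.trans (range_fract_interleave_realLift hx),
    hX.isRotational hmono hnp⟩

lemma exists_perm_strictMono_interleave (hpq : p.Coprime q)
    (hx : ∀ i, IsRotational d q p (x i)) {u : ZMod (n * q) → ℝ}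
    (hrange : Set.range u = ⋃ i, Set.range (x i)) (hu : IsRotational d (n * q) (n * p : ℕ) u) :
    ∃ e : Equiv.Perm (Fin n), StrictMono (interleave fun i => realLift (x (e i))) := by
  have hmono := hu.strictMono_realLift
  have hlift := hu.isLift_realLift
  have hmem (j : ℤ) : ∃ i, Int.fract (realLift u j) ∈ Set.range (x i) := by
    rw [← Set.mem_iUnion, ← hrange, hu.fract_realLift]
    exact ⟨_, rfl⟩
  obtain ⟨S, hS⟩ := interleave_surjective (n := n) (realLift u)
  rw [← hS] at hmono hlift hmem
  rw [isLift_interleave_iff] at hlift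
  have hstrand (i : Fin n) : ∃ i', S i = realLift (x i') := by
    have hv : IsRotational d q p fun k => Int.fract (S i k.val) :=
      (hlift i).isRotational (strictMono_of_interleave hmono i) (hx 0).2.2.1
    obtain ⟨i', k, hk⟩ : ∃ i', Int.fract (S i 0) ∈ Set.range (x i') := by
      simpa only [interleave_apply] using hmem (0 * n + i)
    have hrange_eq : Set.range (fun k : ZMod q => Int.fract (S i k.val)) = Set.range (x i') := by
      rw [hv.range_eq_sigmaOrbit hpq 0, (hx i').range_eq_sigmaOrbit hpq k, hk]
      simp
    exact ⟨i', by rw [← hv.eq_of_range_eq (hx i') hrange_eq, (hlift i).realLift_fract_val]⟩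
  choose e he using hstrand
  have hinj : Function.Injective e := fun i i' h => by
    have hSi : S i 0 = S i' 0 := by rw [he, he, h]
    rw [← interleave_apply S, ← interleave_apply S] at hSi
    simpa [Fin.ext_iff] using hmono.injective hSi
  refine ⟨Equiv.ofBijective e hinj.bijective_of_finite, ?_⟩
  simpa only [Equiv.ofBijective_apply, ← he] using hmono

theorem exists_isRotational_iUnion_iff (hpq : p.Coprime q) (hx : ∀ i, IsRotational d q p (x i)) :
    (∃ u : ZMod (n * q) → ℝ, Set.range u = (⋃ i, Set.range (x i)) ∧
      IsRotational d (n * q) (n * p : ℕ) u) ↔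
    ∃ e : Equiv.Perm (Fin n), StrictMono (interleave fun i => realLift (x (e i))) := by
  refine ⟨fun ⟨u, hrange, hu⟩ => exists_perm_strictMono_interleave hpq hx hrange hu,
    fun ⟨e, he⟩ => ?_⟩
  obtain ⟨u, hrange, hu⟩ := exists_isRotational_of_strictMono_interleave (fun i => hx (e i)) he
  exact ⟨u, hrange.trans (e.surjective.iUnion_comp fun i => Set.range (x i)), hu⟩

lemma injective_interleave_realLift (hpq : p.Coprime q) (hx : ∀ i, IsRotational d q p (x i))
    (hdist : Function.Injective fun i => Set.range (x i)) :
    Function.Injective (interleave fun i => realLift (x i)) := by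
  refine injective_interleave (fun i => (hx i).strictMono_realLift.injective) fun i i' hne => ?_
  refine Set.disjoint_left.2 ?_
  rintro _ ⟨k, rfl⟩ ⟨k', h⟩
  have hfract : x i' k' = x i k := by
    rw [← (hx i).fract_realLift, ← (hx i').fract_realLift, h]
  refine hne (hdist ?_)
  change Set.range (x i) = Set.range (x i')
  rw [(hx i).range_eq_sigmaOrbit hpq k, (hx i').range_eq_sigmaOrbit hpq k', hfract]

end Union

/-- The real number with repeating base-`d` expansion `0.‾(a_0 a_1 … a_{q-1})`, before reduction
modulo `1`. It equals `1` when all digits are `d - 1`. -/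
noncomputable def repeatingValue (d q : ℕ) (a : ZMod q → ℕ) : ℝ :=
  (∑ i ∈ Finset.range q, (a i : ℝ) * (d : ℝ) ^ (q - 1 - i)) / ((d : ℝ) ^ q - 1)

section Digits

variable {d q : ℕ} {a : ZMod q → ℕ}

lemma pow_sub_one_pos (hd : 1 < d) [NeZero q] : (0 : ℝ) < (d : ℝ) ^ q - 1 :=
  sub_pos.2 (one_lt_pow₀ (by exact_mod_cast hd) (NeZero.ne q))

lemma mul_sum_digit_mul_pow [NeZero q] (a : ZMod q → ℕ) :
    d * ∑ i ∈ Finset.range q, (a i : ℝ) * (d : ℝ) ^ (q - 1 - i) =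
      a 0 * ((d : ℝ) ^ q - 1) +
        ∑ i ∈ Finset.range q, (a (i + 1) : ℝ) * (d : ℝ) ^ (q - 1 - i) := by
  obtain ⟨r, rfl⟩ : ∃ r, q = r + 1 := Nat.exists_eq_succ_of_ne_zero (NeZero.ne q)
  have hcast : (r : ZMod (r + 1)) + 1 = 0 := by exact_mod_cast ZMod.natCast_self (r + 1)
  have hshift : ∀ k ∈ Finset.range r, (d : ℝ) * (a (k + 1 : ℕ) * d ^ (r + 1 - 1 - (k + 1))) =
      a (k + 1) * d ^ (r + 1 - 1 - k) := fun k hk => by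
    have hk : k < r := Finset.mem_range.1 hk
    rw [show r + 1 - 1 - k = r + 1 - 1 - (k + 1) + 1 by lia, pow_succ, Nat.cast_succ]
    ring
  rw [Finset.mul_sum, Finset.sum_range_succ', Finset.sum_congr rfl hshift, Finset.sum_range_succ,
    hcast]
  simp only [Nat.cast_zero, Nat.add_sub_cancel, Nat.sub_zero, Nat.sub_self]
  ring

lemma mul_repeatingValue (hd : 1 < d) [NeZero q] (a : ZMod q → ℕ) :
    d * repeatingValue d q a = a 0 + repeatingValue d q fun j => a (j + 1) := by
  have hne : (d : ℝ) ^ q - 1 ≠ 0 := (pow_sub_one_pos hd).ne'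
  rw [repeatingValue, repeatingValue, ← mul_div_assoc, mul_sum_digit_mul_pow, add_div,
    mul_div_cancel_right₀ _ hne]

lemma repeatingValue_nonneg (hd : 1 < d) [NeZero q] (a : ZMod q → ℕ) : 0 ≤ repeatingValue d q a :=
  div_nonneg (Finset.sum_nonneg fun i _ => by positivity) (pow_sub_one_pos hd).le

lemma repeatingValue_le_one (hd : 1 < d) [NeZero q] (ha : ∀ j, a j < d) :
    repeatingValue d q a ≤ 1 := by
  rw [repeatingValue, div_le_one (pow_sub_one_pos hd)]
  calc ∑ i ∈ Finset.range q, (a i : ℝ) * (d : ℝ) ^ (q - 1 - i)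
      ≤ ∑ i ∈ Finset.range q, ((d : ℝ) - 1) * (d : ℝ) ^ (q - 1 - i) := by
        gcongr with i
        rw [le_sub_iff_add_le]
        exact_mod_cast ha i
    _ = (d : ℝ) ^ q - 1 := by
        rw [Finset.sum_range_reflect (fun i => ((d : ℝ) - 1) * (d : ℝ) ^ i), ← Finset.mul_sum,
          mul_geom_sum]

lemma fract_repeatingValue (d q : ℕ) (a : ZMod q → ℕ) :
    Int.fract (repeatingValue d q a) = tuplePoint d q a := rfl

lemma sigmad_tuplePoint (hd : 1 < d) [NeZero q] (a : ZMod q → ℕ) :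
    sigmad d (tuplePoint d q a) = tuplePoint d q fun j => a (j + 1) := by
  rw [← fract_repeatingValue, ← fract_repeatingValue, sigmad_fract, mul_repeatingValue hd,
    Int.fract_natCast_add]

lemma iterate_sigmad_tuplePoint (hd : 1 < d) [NeZero q] (a : ZMod q → ℕ) (m : ℕ) :
    (sigmad d)^[m] (tuplePoint d q a) = tuplePoint d q fun j => a (j + m) := by
  induction m generalizing a with
  | zero => simp
  | succ m ih =>
    rw [Function.iterate_succ_apply, sigmad_tuplePoint hd, ih]
    simp only [Nat.cast_succ, ← add_assoc]

lemma tuplePoint_eq_repeatingValue (hd : 1 < d) [NeZero q] (ha : ∀ j, a j < d)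
    (h : tuplePoint d q a ≠ 0) : tuplePoint d q a = repeatingValue d q a := by
  have hne : repeatingValue d q a ≠ 1 := fun h1 =>
    h (by rw [← fract_repeatingValue, h1, Int.fract_one])
  rw [← fract_repeatingValue, Int.fract_eq_self]
  exact ⟨repeatingValue_nonneg hd a, (repeatingValue_le_one hd ha).lt_of_ne hne⟩

lemma floor_mul_tuplePoint (hd : 1 < d) [NeZero q] (ha : ∀ j, a j < d)
    (h : tuplePoint d q a ≠ 0) (h' : (tuplePoint d q fun j => a (j + 1)) ≠ 0) :
    ⌊d * tuplePoint d q a⌋ = a 0 := by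
  rw [tuplePoint_eq_repeatingValue hd ha h, mul_repeatingValue hd, Int.floor_natCast_add,
    ← tuplePoint_eq_repeatingValue hd (fun j => ha _) h', ← fract_repeatingValue,
    Int.floor_fract, add_zero]

end Digits

namespace IsRotational

variable {d q p : ℕ} [NeZero q] {u : ZMod q → ℝ} {a : ZMod q → ℕ}

lemma apply_natCast_mul (hu : IsRotational d q p u) (hd : 1 < d) (h0 : u 0 = tuplePoint d q a)
    (m : ℕ) : u (m * p) = tuplePoint d q fun j => a (j + m) := by
  rw [← iterate_sigmad_tuplePoint hd, ← h0, hu.iterate_sigmad, zero_add]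

lemma floor_mul_apply (hu : IsRotational d q p u) (hd : 1 < d) (hpq : p.Coprime q)
    (ha : ∀ j, a j < d) (h0 : u 0 = tuplePoint d q a) (k : ZMod q) :
    ⌊d * u k⌋ = a (k * (p : ZMod q)⁻¹) := by
  obtain ⟨m, rfl⟩ := exists_eq_natCast_mul_of_coprime hpq k
  have hne (m : ℕ) : (tuplePoint d q fun j => a (j + m)) ≠ 0 := by
    rw [← hu.apply_natCast_mul hd h0]
    exact hu.apply_ne_zero _
  have hnext : (tuplePoint d q fun j => a (j + 1 + m)) ≠ 0 := by
    simpa only [Nat.cast_succ, add_assoc, add_comm (1 : ZMod q)] using hne (m + 1)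
  rw [hu.apply_natCast_mul hd h0, floor_mul_tuplePoint hd (fun j => ha _) (hne m) hnext, mul_assoc,
    ZMod.coe_mul_inv_eq_one p hpq, mul_one, zero_add]

lemma repDigit_eq_carry (hu : IsRotational d q p u) (hd : 1 < d) (hpq : p.Coprime q) (hp : p < q)
    (ha : ∀ j, a j < d) (h0 : u 0 = tuplePoint d q a) {k : ℕ} (hk : k < q) :
    (repDigit q p a k : ℤ) = carry d p (realLift u) k := by
  have hX := hu.isLift_realLift
  have hp0 : p ≠ 0 := fun h => hu.2.2.1 (h ▸ Nat.cast_zero)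
  have hnonneg : 0 ≤ carry d p (realLift u) k :=
    (hX.carry_zero_nonneg hp).trans (hX.monotone_carry (by lia) hu.strictMono_realLift (by lia))
  have hlift : realLift u k = u k := by
    rw [realLift, Int.ediv_eq_zero_of_lt (by lia) (by lia), Int.cast_zero, add_zero,
      Int.cast_natCast]
  have hcarry : carry d p (realLift u) k = a (k * (p : ZMod q)⁻¹) - (k + p) / q := by
    rw [carry, hlift, hu.floor_mul_apply hd hpq ha h0, hX.floor_eq]
  rw [hcarry] at hnonneg ⊢
  have hdiv : ((k : ℤ) + p) / q = if k ≤ q - p - 1 then 0 else 1 := by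
    split_ifs
    · exact Int.ediv_eq_zero_of_lt (by lia) (by lia)
    · rw [Int.ediv_eq_iff_of_pos (by lia)]
      lia
  rw [hdiv] at hnonneg ⊢
  rw [repDigit]
  split_ifs at hnonneg ⊢ <;> lia

end IsRotational

lemma repDigit_eq_carry_interleave {d q p n : ℕ} [NeZero q] [NeZero n] {x : Fin n → ZMod q → ℝ}
    {a : Fin n → ZMod q → ℕ} (hx : ∀ i, IsRotational d q p (x i)) (hd : 1 < d)
    (hpq : p.Coprime q) (hp : p < q) (ha : ∀ i j, a i j < d)
    (h0 : ∀ i, x i 0 = tuplePoint d q (a i)) {j : ℕ} (hj : j < n * q) :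
    (repDigit q p (a ⟨j % n, j.mod_lt (NeZero.pos n)⟩) (j / n) : ℤ) =
      carry d (n * p) (interleave fun i => realLift (x i)) j := by
  rw [carry_interleave, interleave_natCast,
    (hx _).repDigit_eq_carry hd hpq hp (ha _) (h0 _) (Nat.div_lt_of_lt_mul hj)]

theorem stmt10 (d q p n : ℕ) (hd : 2 ≤ d) (hq : 2 ≤ q)
    (hp1 : 1 ≤ p) (hp2 : p ≤ q - 1) (hpq : Nat.gcd p q = 1) (hn : 1 ≤ n)
    -- for each `i`, `O_i` is the orbit of the point with digits `a i`, which is the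
    -- least element of `O_i` (so that `repDigit q p (a i)` is the representative
    -- sequence `s_i` of `O_i`) …
    (a : Fin n → ZMod q → ℕ) (ha : ∀ i j, a i j < d)
    (hleast : ∀ i, ∀ x ∈ sigmaOrbit d (tuplePoint d q (a i)), tuplePoint d q (a i) ≤ x)
    -- … and `O_i` is a `σ_d`-rotational orbit with rotation number `p/q`
    (hrot : ∀ i, ∃ u : ZMod q → ℝ,
      Set.range u = sigmaOrbit d (tuplePoint d q (a i)) ∧
      IsRotational d q ((p : ℕ) : ZMod q) u)
    -- the orbits are pairwise distinct
    (hdist : ∀ i j, i ≠ j →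
      sigmaOrbit d (tuplePoint d q (a i)) ≠ sigmaOrbit d (tuplePoint d q (a j))) :
    -- LHS: `A = O_1 ∪ ⋯ ∪ O_n` is `σ_d`-rotational with rotation number `p/q`
    -- (i.e. rotation number `np/(nq)` for its `nq` elements)
    (∃ u : ZMod (n * q) → ℝ,
        Set.range u = (⋃ i, sigmaOrbit d (tuplePoint d q (a i))) ∧
        IsRotational d (n * q) ((n * p : ℕ) : ZMod (n * q)) u) ↔
    -- RHS: after relabeling the orbits by a permutation `e`, the interleaved sequence
    -- of the representative sequences (position `j = k·n + i` carries the digit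
    -- `b_k^{(e(i))}`) is nondecreasing
    (∃ e : Equiv.Perm (Fin n), ∀ j : ℕ, j + 1 < n * q →
        repDigit q p (a (e ⟨j % n, Nat.mod_lt _ (by omega)⟩)) (j / n) ≤
        repDigit q p (a (e ⟨(j + 1) % n, Nat.mod_lt _ (by omega)⟩)) ((j + 1) / n)) := by
  have : NeZero q := ⟨by lia⟩
  have : NeZero n := ⟨by lia⟩
  choose x hrange hx using hrot
  have h0 (i : Fin n) : x i 0 = tuplePoint d q (a i) :=
    (hx i).isLeast_range.unique (hrange i ▸ ⟨⟨0, rfl⟩, hleast i⟩)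
  have hinj : Function.Injective fun i => Set.range (x i) := fun i j h => by
    by_contra hne
    exact hdist i j hne (by simpa only [hrange] using h)
  simp only [← hrange]
  rw [exists_isRotational_iUnion_iff hpq hx]
  refine exists_congr fun e => ?_
  have hlift : IsLift d (n * q) (n * p) (interleave fun i => realLift (x (e i))) :=
    isLift_interleave_iff.2 fun i => (hx (e i)).isLift_realLift
  rw [hlift.strictMono_iff_monotone_carry hd (by nlinarith)
      (injective_interleave_realLift hpq (fun i => hx (e i)) (hinj.comp e.injective)),
    hlift.monotone_carry_iff (by lia) (by positivity) (by gcongr; lia)]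
  refine forall₂_congr fun j hj => ?_
  have hdigit {k : ℕ} (hk : k < n * q) := repDigit_eq_carry_interleave (fun i => hx (e i)) hd hpq
    (by lia) (fun i => ha (e i)) (fun i => h0 (e i)) hk
  rw [← hdigit hj, ← hdigit (by lia), Nat.cast_le]
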